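/- In ℝ³, for the i-th divergence-free Gaussian field g_i = (4π)^{-3/2}(1+εt)^{-3/2} ∇×(e^{-|x|²/(4(1+εt))} e_i), the field V_i := (4π)^{-3/2}(1+εt)^{-3/2}[e^{-|x|²/(4(1+εt))} e_i - ∂_{x_i}∇(Δ^{-1} e^{-|x|²/(4(1+εt))})] satisfies ∇×V_i = g_i and ∇·V_i = 0; moreover Δ^{-1}e^{-|x|²/(4λ)} has radial derivative ∂_r u = -(2λ/r)e^{-r²/(4λ)} + (2λ/r²)∫₀^r e^{-z²/(4λ)}dz (with λ = 1+εt). -/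

import Mathlib

open MeasureTheory Real intervalIntegral

noncomputable section

/-- Directional partial derivative in the `i`-th coordinate direction. -/
def pd (i : Fin 3) (f : EuclideanSpace ℝ (Fin 3) → ℝ) :
    EuclideanSpace ℝ (Fin 3) → ℝ :=
  fun x => fderiv ℝ f x (EuclideanSpace.single i 1)

/-- A vector in ℝ³ from its three components. -/
def vec3 (a b c : ℝ) : EuclideanSpace ℝ (Fin 3) :=
  (WithLp.equiv 2 (Fin 3 → ℝ)).symm ![a, b, c]

/-- The curl of a vector field on ℝ³. -/
def curl3 (v : EuclideanSpace ℝ (Fin 3) → EuclideanSpace ℝ (Fin 3))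
    (x : EuclideanSpace ℝ (Fin 3)) : EuclideanSpace ℝ (Fin 3) :=
  vec3 (pd 1 (fun y => v y 2) x - pd 2 (fun y => v y 1) x)
       (pd 2 (fun y => v y 0) x - pd 0 (fun y => v y 2) x)
       (pd 0 (fun y => v y 1) x - pd 1 (fun y => v y 0) x)

/-- The inverse Laplacian on ℝ³, given by convolution with `-1/(4π|x|)`. -/
def invLap (f : EuclideanSpace ℝ (Fin 3) → ℝ) (x : EuclideanSpace ℝ (Fin 3)) : ℝ :=
  -(1 / (4 * π)) * ∫ y, f y / ‖x - y‖

/-- The Gaussian `e^{-|x|²/(4λ)}` with `λ = 1 + εt`. -/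
def gaussL (lam : ℝ) (x : EuclideanSpace ℝ (Fin 3)) : ℝ :=
  exp (-‖x‖ ^ 2 / (4 * lam))

/-- The Biot–Savart potential field
`V_i = (4π)^{-3/2}λ^{-3/2}[e^{-|x|²/(4λ)}e_i - ∂_{x_i}∇(Δ^{-1}e^{-|x|²/(4λ)})]`. -/
def biotV (lam : ℝ) (i : Fin 3) (x : EuclideanSpace ℝ (Fin 3)) :
    EuclideanSpace ℝ (Fin 3) :=
  ((4 * π) ^ (-(3 : ℝ) / 2) * lam ^ (-(3 : ℝ) / 2)) •
    (gaussL lam x • EuclideanSpace.single i 1 -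
      vec3 (pd i (pd 0 (invLap (gaussL lam))) x)
           (pd i (pd 1 (invLap (gaussL lam))) x)
           (pd i (pd 2 (invLap (gaussL lam))) x))

lemma auxA (a c : ℝ) (ha : 0 < a) (hc : 0 < c) :
    ∫ w in Set.Ioo (0:ℝ) 1, (√a / (√(1 - w^2))^3) * exp (-(a * w^2 / (1 - w^2)) * c^2) = √π / (2 * c) := by
  have key := integral_image_eq_integral_abs_deriv_smul (s := Set.Ioo (0:ℝ) 1)
    (f := fun w => √a * w / √(1 - w^2)) (f' := fun w => √a / (√(1 - w^2))^3) measurableSet_Ioo ?_ ?_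
    (fun s => exp (-(c^2) * s^2))
  · have him : (fun w => √a * w / √(1 - w^2)) '' Set.Ioo (0:ℝ) 1 = Set.Ioi 0 := by
      ext s
      simp only [Set.mem_image, Set.mem_Ioo, Set.mem_Ioi]
      constructor
      · rintro ⟨w, ⟨h0, h1⟩, rfl⟩
        have : 0 < 1 - w^2 := by nlinarith
        positivity
      · intro hs
        have hq : 0 < a + s^2 := by positivity
        refine ⟨s / √(a + s^2), ⟨by positivity, ?_⟩, ?_⟩
        · rw [div_lt_one (by positivity)]
          exact Real.lt_sqrt_of_sq_lt (by linarith)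
        · have : 1 - (s / √(a + s^2))^2 = a / (a + s^2) := by
            rw [div_pow, Real.sq_sqrt hq.le]; field_simp; ring
          rw [this, Real.sqrt_div ha.le]
          have h1 : √a ≠ 0 := by positivity
          have h2 : √(a + s^2) ≠ 0 := by positivity
          field_simp
    rw [him, integral_gaussian_Ioi] at key
    have e : √(π / c^2) / 2 = √π / (2 * c) := by
      rw [Real.sqrt_div pi_pos.le, Real.sqrt_sq hc.le]; field_simp
    rw [← e, key]
    refine setIntegral_congr_fun measurableSet_Ioo ?_
    rintro w ⟨h0, h1⟩
    have : 0 < 1 - w^2 := by nlinarith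
    have h3 : 0 < √a / (√(1 - w^2))^3 := by positivity
    simp only [smul_eq_mul]
    rw [abs_of_pos h3, div_pow, mul_pow, Real.sq_sqrt ha.le, Real.sq_sqrt this.le]
    ring_nf
  · rintro w ⟨h0, h1⟩
    have h : 0 < 1 - w^2 := by nlinarith
    have hs : √(1 - w^2) ≠ 0 := by positivity
    have hd : HasDerivAt (fun w : ℝ => 1 - w^2) (-(2*w)) w := by
      simpa using ((hasDerivAt_pow 2 w).const_sub 1)
    have := (((hasDerivAt_id w).const_mul √a).div (hd.sqrt h.ne') hs)
    refine (this.congr_deriv ?_).hasDerivWithinAt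
    simp only [id]
    have h2 : √(1 - w^2)^2 = 1 - w^2 := Real.sq_sqrt h.le
    field_simp
    rw [h2]; ring
  · rintro w ⟨h0, h1⟩ v ⟨h0', h1'⟩ he
    have h : 0 < 1 - w^2 := by nlinarith
    have h' : 0 < 1 - v^2 := by nlinarith
    simp only at he
    have := congrArg (· ^ 2) he
    simp only [div_pow, mul_pow, Real.sq_sqrt ha.le, Real.sq_sqrt h.le, Real.sq_sqrt h'.le] at this
    rw [div_eq_div_iff h.ne' h'.ne'] at this
    have h4 : a * (w^2 - v^2) = 0 := by linarith
    have h5 : (w - v) * (w + v) = 0 := by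
      rcases mul_eq_zero.1 h4 with h | h
      · linarith
      · linarith
    rcases mul_eq_zero.1 h5 with h | h <;> linarith

abbrev E3 := EuclideanSpace ℝ (Fin 3)

lemma auxB (a w : ℝ) (ha : 0 < a) (h0 : 0 < w) (h1 : w < 1) (x : E3) :
    ∫ y : E3, exp (-a * ‖y‖^2) * ((√a / (√(1 - w^2))^3) * exp (-(a * w^2 / (1 - w^2)) * ‖x - y‖^2)) =
      √π ^ 3 / a * exp (-a * w^2 * ‖x‖^2) := by
  have h : 0 < 1 - w^2 := by nlinarith
  have e : ∀ y : E3, exp (-a * ‖y‖^2) * ((√a / (√(1 - w^2))^3) * exp (-(a * w^2 / (1 - w^2)) * ‖x - y‖^2))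
     = (√a / (√(1 - w^2))^3 * exp (-a * w^2 * ‖x‖^2)) * exp (-(a / (1 - w^2)) * ‖y - w^2 • x‖^2) := by
    intro y
    rw [mul_left_comm, mul_assoc, ← exp_add, ← exp_add]
    congr 2
    rw [norm_sub_sq_real, norm_sub_sq_real, inner_smul_right, norm_smul, real_inner_comm x y, Real.norm_eq_abs, mul_pow, sq_abs]
    field_simp
    ring
  simp_rw [e]
  rw [MeasureTheory.integral_const_mul, integral_sub_right_eq_self (fun y : E3 => exp (-(a / (1 - w^2)) * ‖y‖^2)),
    GaussianFourier.integral_rexp_neg_mul_sq_norm (by positivity)]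
  have hp : (π / (a / (1 - w^2))) ^ ((Module.finrank ℝ E3 : ℝ) / 2) = (√π * √(1 - w^2) / √a)^3 := by
    have : π / (a / (1 - w^2)) = (√π * √(1 - w^2) / √a)^2 := by
      rw [div_pow, mul_pow, Real.sq_sqrt ha.le, Real.sq_sqrt h.le, Real.sq_sqrt pi_pos.le]; field_simp
    have hf : Module.finrank ℝ E3 = 3 := by simp [E3]
    rw [this, hf]
    have hm : 0 ≤ √π * √(1 - w^2) / √a := by positivity
    generalize √π * √(1 - w^2) / √a = m at hm
    rw [← Real.rpow_natCast m 2, ← Real.rpow_mul hm, ← Real.rpow_natCast m 3]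
    norm_num
  rw [hp]
  have h2 : √a ^2 = a := Real.sq_sqrt ha.le
  have h3 : √(1 - w^2) ≠ 0 := by positivity
  have h4 : √a ≠ 0 := by positivity
  field_simp
  rw [h2]

lemma auxN (a : ℝ) (ha : 0 < a) (x : E3) :
    ∫ y : E3, exp (-a * ‖y‖^2) / ‖x - y‖ = 2 * π / a * ∫ w in (0:ℝ)..1, exp (-a * w^2 * ‖x‖^2) := by
  set K : E3 → ℝ → ℝ := fun y w => exp (-a * ‖y‖^2) * ((√a / (√(1 - w^2))^3) * exp (-(a * w^2 / (1 - w^2)) * ‖x - y‖^2)) with hK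
  have hm : Measurable (Function.uncurry K) := by
    simp only [hK, Function.uncurry_def]
    fun_prop
  have hB : ∀ w ∈ Set.Ioo (0:ℝ) 1, ∫ y, K y w = √π ^ 3 / a * exp (-a * w^2 * ‖x‖^2) :=
    fun w hw => auxB a w ha hw.1 hw.2 x
  have hpos : ∀ y w, 0 ≤ K y w := fun y w => by simp only [hK]; positivity
  have hI : Integrable (Function.uncurry K) (volume.prod (volume.restrict (Set.Ioo (0:ℝ) 1))) := by
    rw [integrable_prod_iff' hm.aestronglyMeasurable]
    constructor
    · refine (ae_restrict_iff' measurableSet_Ioo).2 (.of_forall fun w hw => ?_)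
      refine Not.imp_symm integral_undef ?_
      have := hB w hw
      simp only [Function.uncurry_apply_pair]
      rw [this]
      positivity
    · have : IntegrableOn (fun w : ℝ => √π ^ 3 / a * exp (-a * w^2 * ‖x‖^2)) (Set.Ioo 0 1) :=
        (Continuous.integrableOn_Icc (by fun_prop)).mono_set Set.Ioo_subset_Icc_self
      refine IntegrableOn.congr_fun this ?_ measurableSet_Ioo
      intro w hw
      simp only [Function.uncurry_apply_pair, Real.norm_of_nonneg (hpos _ _)]
      rw [hB w hw]
  have sw := integral_integral_swap hI
  rw [setIntegral_congr_fun measurableSet_Ioo hB] at sw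
  have hA : (fun y => ∫ w in Set.Ioo (0:ℝ) 1, K y w) =ᵐ[volume] fun y => √π / 2 * (exp (-a * ‖y‖^2) / ‖x - y‖) := by
    have : ∀ᵐ y : E3, y ≠ x := by simp [ae_iff]
    filter_upwards [this] with y hy
    have hc : 0 < ‖x - y‖ := norm_pos_iff.2 (sub_ne_zero.2 hy.symm)
    simp only [hK]
    rw [MeasureTheory.integral_const_mul, auxA a _ ha hc]
    field_simp
  rw [integral_congr_ae hA, MeasureTheory.integral_const_mul, MeasureTheory.integral_const_mul,
    ← integral_Ioc_eq_integral_Ioo, ← intervalIntegral.integral_of_le zero_le_one] at sw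
  have h2 : √π ^2 = π := Real.sq_sqrt pi_pos.le
  have h3 : √π ≠ 0 := by positivity
  have : √π / 2 * (∫ y : E3, exp (-a * ‖y‖^2) / ‖x - y‖) = √π / 2 * (2 * π / a * ∫ w in (0:ℝ)..1, exp (-a * w^2 * ‖x‖^2)) := by
    rw [sw]
    have : √π ^ 3 = √π * π := by rw [pow_succ, h2, mul_comm]
    rw [this]; ring
  exact mul_left_cancel₀ (by positivity) this

noncomputable def FF (a : ℝ) (k : ℕ) (q : ℝ) : ℝ := ∫ w in (0:ℝ)..1, w^(2*k) * exp (-a * w^2 * q)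

lemma FF_deriv (a : ℝ) (k : ℕ) (q : ℝ) : HasDerivAt (FF a k) (-a * FF a (k+1) q) q := by
  have := intervalIntegral.hasDerivAt_integral_of_dominated_loc_of_deriv_le (μ := volume) (a := 0) (b := 1)
    (F := fun q w : ℝ => w^(2*k) * exp (-a * w^2 * q))
    (F' := fun q w : ℝ => w^(2*k) * (exp (-a * w^2 * q) * (-a * w^2))) (x₀ := q)
    (s := Metric.ball q 1) (bound := fun _ => exp (|a| * (|q| + 1)) * |a|)
    (Metric.ball_mem_nhds q one_pos)
    (.of_forall fun q => (by fun_prop : Continuous _).aestronglyMeasurable)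
    ((by fun_prop : Continuous _).intervalIntegrable _ _)
    ((by fun_prop : Continuous _).aestronglyMeasurable)
    (.of_forall ?_) (by simp) (.of_forall ?_)
  · refine this.2.congr_deriv ?_
    rw [FF, ← intervalIntegral.integral_const_mul]
    congr 1; ext w; ring
  · intro w hw p hp
    rw [Set.uIoc_of_le zero_le_one] at hw
    have hp' : |p| ≤ |q| + 1 := by
      rw [Metric.mem_ball, Real.dist_eq] at hp
      have := abs_sub_abs_le_abs_sub p q
      linarith
    have hw2 : |w| ^ 2 ≤ 1 := pow_le_one₀ (abs_nonneg _) (by rw [abs_of_pos hw.1]; exact hw.2)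
    have hw3 : |w| ^ (2*k) ≤ 1 := pow_le_one₀ (abs_nonneg _) (by rw [abs_of_pos hw.1]; exact hw.2)
    rw [norm_mul, norm_mul, norm_mul, norm_neg, norm_pow, norm_pow]
    simp only [Real.norm_eq_abs, abs_exp]
    have h1 : exp (-a * w^2 * p) ≤ exp (|a| * (|q| + 1)) := by
      apply exp_le_exp.2
      refine (le_abs_self _).trans ?_
      rw [abs_mul, abs_mul, abs_neg, abs_pow]
      have : |a| * |w|^2 ≤ |a| := mul_le_of_le_one_right (abs_nonneg _) hw2
      gcongr
    have h2 : |a| * |w|^2 ≤ |a| := mul_le_of_le_one_right (abs_nonneg _) hw2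
    calc _ ≤ 1 * (exp (|a| * (|q| + 1)) * |a|) := by gcongr
      _ = _ := one_mul _
  · intro w hw p hp
    have := (((hasDerivAt_id p).const_mul (-a * w^2)).exp).const_mul (w^(2*k))
    simpa using this

lemma FF_contDiff (a : ℝ) (n : ℕ) : ∀ k, ContDiff ℝ n (FF a k) := by
  induction n with
  | zero => 
    intro k
    exact contDiff_zero.2 (continuous_iff_continuousAt.2 fun q => (FF_deriv a k q).continuousAt)
  | succ n ih =>
    intro k
    rw [Nat.cast_succ, contDiff_succ_iff_deriv]
    refine ⟨fun q => (FF_deriv a k q).differentiableAt, by simp, ?_⟩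
    have : deriv (FF a k) = fun q => -a * FF a (k+1) q := funext fun q => (FF_deriv a k q).deriv
    rw [this]
    exact contDiff_const.mul (ih _)

/-- integration by parts -/
lemma FF_rel (a : ℝ) (k : ℕ) (q : ℝ) :
    (2*k+1) * FF a k q - 2 * a * q * FF a (k+1) q = exp (-a * q) := by
  have h : ∀ w ∈ Set.uIcc (0:ℝ) 1, HasDerivAt (fun w : ℝ => w^(2*k+1) * exp (-a * w^2 * q))
      ((2*k+1) * (w^(2*k) * exp (-a * w^2 * q)) - 2 * a * q * (w^(2*(k+1)) * exp (-a * w^2 * q))) w := by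
    intro w _
    have h1 := ((((hasDerivAt_pow 2 w).const_mul (-a)).mul_const q).exp)
    refine ((hasDerivAt_pow (2*k+1) w).mul h1).congr_deriv ?_
    simp; ring
  have := integral_eq_sub_of_hasDerivAt h ((by fun_prop : Continuous _).intervalIntegrable _ _)
  rw [intervalIntegral.integral_sub ((by fun_prop : Continuous _).intervalIntegrable _ _) ((by fun_prop : Continuous _).intervalIntegrable _ _),
    intervalIntegral.integral_const_mul, intervalIntegral.integral_const_mul] at this
  simpa [FF] using this

open scoped ContDiff

lemma pd_radial (G : ℝ → ℝ) (G' : ℝ) (x : E3) (h : HasDerivAt G G' (‖x‖^2)) (j : Fin 3) :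
    pd j (fun y => G (‖y‖^2)) x = G' * (2 * x j) := by
  have h1 := h.comp_hasFDerivAt x ((hasStrictFDerivAt_norm_sq x).hasFDerivAt)
  have h2 : fderiv ℝ (fun y : E3 => G (‖y‖^2)) x = _ := h1.fderiv
  unfold pd
  rw [h2]
  simp [EuclideanSpace.inner_single_right]

lemma pd_contDiff {f : E3 → ℝ} (hf : ContDiff ℝ ∞ f) (j : Fin 3) : ContDiff ℝ ∞ (pd j f) := by
  unfold pd
  exact (hf.fderiv_right (m := ∞) (by simp)).clm_apply contDiff_const

lemma pd_comm {f : E3 → ℝ} (hf : ContDiff ℝ ∞ f) (i j : Fin 3) : pd i (pd j f) = pd j (pd i f) := by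
  funext x
  have hs : IsSymmSndFDerivAt ℝ f x :=
    ((contDiff_infty.1 hf 2).contDiffAt (x := x)).isSymmSndFDerivAt (by simp)
  have hd : DifferentiableAt ℝ (fderiv ℝ f) x :=
    ((hf.fderiv_right (m := ∞) (by simp)).differentiable (by simp)) x
  have e : ∀ i j : Fin 3, pd i (pd j f) x =
      fderiv ℝ (fderiv ℝ f) x (EuclideanSpace.single i 1) (EuclideanSpace.single j 1) := by
    intro i j
    unfold pd
    rw [fderiv_clm_apply hd (differentiableAt_const _)]
    simp
  rw [e, e]
  exact hs _ _

lemma pd_lin {f g : E3 → ℝ} (hf : ContDiff ℝ ∞ f) (hg : ContDiff ℝ ∞ g) (c d : ℝ) (k : Fin 3) (x : E3) :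
    pd k (fun y => c * (f y * d - g y)) x = c * (pd k f x * d - pd k g x) := by
  have h1 : HasFDerivAt f _ x := ((hf.differentiable (by simp)) x).hasFDerivAt
  have h2 : HasFDerivAt g _ x := ((hg.differentiable (by simp)) x).hasFDerivAt
  have h := ((h1.mul_const d).sub h2).const_mul c
  have h' : fderiv ℝ (fun y => c * (f y * d - g y)) x = _ := h.fderiv
  unfold pd
  rw [h']
  simp only [ContinuousLinearMap.smul_apply, ContinuousLinearMap.sub_apply, smul_eq_mul]
  ring

lemma gaussL_eq (lam : ℝ) (x : E3) : gaussL lam x = exp (-(1 / (4 * lam)) * ‖x‖^2) := by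
  unfold gaussL; congr 1; ring

lemma gaussL_contDiff (lam : ℝ) : ContDiff ℝ ∞ (gaussL lam) := by
  have : gaussL lam = fun x : E3 => exp (-(1 / (4 * lam)) * ‖x‖^2) := funext (gaussL_eq lam)
  rw [this]
  exact (contDiff_const.mul (contDiff_norm_sq ℝ)).exp

lemma invLap_eq (lam : ℝ) (hl : 0 < lam) :
    invLap (gaussL lam) = fun x => -(2 * lam) * FF (1 / (4 * lam)) 0 (‖x‖^2) := by
  funext x
  unfold invLap
  simp_rw [gaussL_eq]
  rw [auxN _ (by positivity)]
  have : FF (1 / (4 * lam)) 0 (‖x‖^2) = ∫ w in (0:ℝ)..1, exp (-(1 / (4 * lam)) * w^2 * ‖x‖^2) := by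
    simp [FF]
  rw [this]
  have := pi_pos
  generalize (∫ w in (0:ℝ)..1, exp (-(1 / (4 * lam)) * w^2 * ‖x‖^2)) = I
  field_simp
  try ring

lemma invLap_contDiff (lam : ℝ) (hl : 0 < lam) : ContDiff ℝ ∞ (invLap (gaussL lam)) := by
  rw [invLap_eq lam hl]
  exact contDiff_const.mul ((contDiff_infty.2 fun n => FF_contDiff _ n 0).comp (contDiff_norm_sq ℝ))

lemma pd_invLap (lam : ℝ) (hl : 0 < lam) (j : Fin 3) :
    pd j (invLap (gaussL lam)) = fun x => x j * FF (1 / (4 * lam)) 1 (‖x‖^2) := by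
  funext x
  rw [invLap_eq lam hl, pd_radial (fun q => -(2 * lam) * FF (1 / (4 * lam)) 0 q) _ x
    ((FF_deriv _ 0 _).const_mul _)]
  field_simp
  ring_nf

lemma pd_pd_invLap (lam : ℝ) (hl : 0 < lam) (j : Fin 3) (x : E3) :
    pd j (pd j (invLap (gaussL lam))) x = FF (1 / (4 * lam)) 1 (‖x‖^2)
      - 2 * (1 / (4 * lam)) * (x j)^2 * FF (1 / (4 * lam)) 2 (‖x‖^2) := by
  rw [pd_invLap lam hl]
  have hd : HasDerivAt (FF (1 / (4 * lam)) 1) _ (‖x‖^2) := FF_deriv (1 / (4 * lam)) 1 (‖x‖^2)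
  have h1 := hd.comp_hasFDerivAt x ((hasStrictFDerivAt_norm_sq x).hasFDerivAt)
  have h0 : HasFDerivAt (fun y : E3 => y j) (EuclideanSpace.proj j : E3 →L[ℝ] ℝ) x :=
    (EuclideanSpace.proj j : E3 →L[ℝ] ℝ).hasFDerivAt
  have h2 : fderiv ℝ (fun y : E3 => y j * FF (1 / (4 * lam)) 1 (‖y‖^2)) x = _ := (h0.mul h1).fderiv
  unfold pd
  rw [h2]
  simp [EuclideanSpace.inner_single_right]
  ring

lemma lap_invLap (lam : ℝ) (hl : 0 < lam) (x : E3) :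
    ∑ j, pd j (pd j (invLap (gaussL lam))) x = gaussL lam x := by
  have h := FF_rel (1 / (4 * lam)) 1 (‖x‖^2)
  have hn : ‖x‖^2 = x 0 ^2 + x 1 ^2 + x 2 ^2 := by
    rw [EuclideanSpace.real_norm_sq_eq, Fin.sum_univ_three]
  rw [gaussL_eq, ← h, Fin.sum_univ_three, pd_pd_invLap lam hl, pd_pd_invLap lam hl, pd_pd_invLap lam hl]
  generalize FF (1 / (4 * lam)) 1 (‖x‖^2) = A
  norm_num
  generalize FF _ 2 (‖x‖^2) = B
  rw [hn]
  ring

lemma biotV_apply (lam : ℝ) (i j : Fin 3) (y : E3) :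
    biotV lam i y j = ((4 * π) ^ (-(3 : ℝ) / 2) * lam ^ (-(3 : ℝ) / 2)) *
      (gaussL lam y * (EuclideanSpace.single i (1:ℝ) : E3) j - pd i (pd j (invLap (gaussL lam))) y) := by
  unfold biotV vec3
  fin_cases j <;> simp

/-- For the divergence-free Gaussian field
`g_i = (4π)^{-3/2}λ^{-3/2}∇×(e^{-|x|²/(4λ)}e_i)`, the field `V_i` satisfies `∇×V_i = g_i`
and `∇·V_i = 0`; moreover `Δ^{-1}e^{-|x|²/(4λ)}` has radial derivative
`∂_r u = -(2λ/r)e^{-r²/(4λ)} + (2λ/r²)∫₀^r e^{-z²/(4λ)}dz` (so that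
`∇(Δ^{-1}e^{-|·|²/(4λ)})(x) = (∂_r u)(|x|) x/|x|`), with `λ = 1 + εt`. -/
theorem biotSavart_gaussian (ε t : ℝ) (hε : 0 ≤ ε) (ht : 0 ≤ t) (i : Fin 3) :
    (∀ x : EuclideanSpace ℝ (Fin 3),
      curl3 (biotV (1 + ε * t) i) x =
        ((4 * π) ^ (-(3 : ℝ) / 2) * (1 + ε * t) ^ (-(3 : ℝ) / 2)) •
          curl3 (fun y => gaussL (1 + ε * t) y • EuclideanSpace.single i 1) x) ∧
    (∀ x : EuclideanSpace ℝ (Fin 3),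
      (∑ j : Fin 3, pd j (fun y => biotV (1 + ε * t) i y j) x) = 0) ∧
    (∀ x : EuclideanSpace ℝ (Fin 3), x ≠ 0 → ∀ j : Fin 3,
      pd j (invLap (gaussL (1 + ε * t))) x =
        (x j / ‖x‖) *
          (-(2 * (1 + ε * t) / ‖x‖) * exp (-‖x‖ ^ 2 / (4 * (1 + ε * t))) +
            (2 * (1 + ε * t) / ‖x‖ ^ 2) *
              ∫ z in (0 : ℝ)..‖x‖, exp (-z ^ 2 / (4 * (1 + ε * t))))) := by
  have hl : 0 < 1 + ε * t := by positivity
  generalize 1 + ε * t = lam at hl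
  have hg := gaussL_contDiff lam
  have hu := invLap_contDiff lam hl
  have hV : ∀ k j x, pd k (fun y => biotV lam i y j) x =
      ((4 * π) ^ (-(3 : ℝ) / 2) * lam ^ (-(3 : ℝ) / 2)) *
      (pd k (gaussL lam) x * (EuclideanSpace.single i (1:ℝ) : E3) j
        - pd k (pd i (pd j (invLap (gaussL lam)))) x) := by
    intro k j x
    simp_rw [biotV_apply]
    exact pd_lin hg (pd_contDiff (pd_contDiff hu j) i) _ _ k x
  have hsym : ∀ k j, pd k (pd i (pd j (invLap (gaussL lam)))) =
      pd i (pd k (pd j (invLap (gaussL lam)))) := fun k j => pd_comm (pd_contDiff hu j) k i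
  refine ⟨fun x => ?_, fun x => ?_, fun x hx j => ?_⟩
  · have hG : ∀ k j, pd k (fun y => (gaussL lam y • (EuclideanSpace.single i (1:ℝ) : E3)) j) x =
        pd k (gaussL lam) x * (EuclideanSpace.single i (1:ℝ) : E3) j := by
      intro k j
      have := pd_lin hg (contDiff_const (c := (0:ℝ))) 1 ((EuclideanSpace.single i (1:ℝ) : E3) j) k x
      simpa [pd] using this
    unfold curl3
    simp only [hV, hG, hsym]
    rw [pd_comm hu 2 1, pd_comm hu 2 0, pd_comm hu 1 0]
    unfold vec3
    ext k
    fin_cases k <;> simp <;> ring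
  · simp only [hV, hsym]
    have hlap : (fun y => ∑ j, pd j (pd j (invLap (gaussL lam))) y) = gaussL lam :=
      funext (lap_invLap lam hl)
    have h1 : ∑ j, pd i (pd j (pd j (invLap (gaussL lam)))) x = pd i (gaussL lam) x := by
      conv_rhs => rw [← hlap]
      unfold pd
      rw [fderiv_fun_sum]
      · simp
      · intro j _
        exact ((pd_contDiff (pd_contDiff hu j) j).differentiable (by simp)) x
    rw [← Finset.mul_sum, Finset.sum_sub_distrib, h1]
    have h2 : ∑ j, pd j (gaussL lam) x * (EuclideanSpace.single i (1:ℝ) : E3) j = pd i (gaussL lam) x := by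
      simp [Pi.single_apply]
    rw [h2]; ring
  · have hr : 0 < ‖x‖ := norm_pos_iff.2 hx
    rw [pd_invLap lam hl]
    have h := FF_rel (1 / (4 * lam)) 0 (‖x‖^2)
    have hsub : FF (1 / (4 * lam)) 0 (‖x‖^2) = ‖x‖⁻¹ * ∫ z in (0 : ℝ)..‖x‖, exp (-z ^ 2 / (4 * lam)) := by
      have := intervalIntegral.integral_comp_mul_right (a := 0) (b := 1) (fun z : ℝ => exp (-z ^ 2 / (4 * lam))) hr.ne'
      simp only [zero_mul, one_mul, smul_eq_mul] at this
      rw [← this, FF]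
      congr 1; ext w
      simp; ring
    have he : exp (-‖x‖ ^ 2 / (4 * lam)) = exp (-(1 / (4 * lam)) * ‖x‖ ^ 2) := by congr 1; ring
    rw [he, ← h, hsub]
    simp
    field_simp
    ring
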